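/- Let M be an acyclic matching on the graph G(C•) of the chain complex C•. Then the map g is a morphism of complexes: ∂ ∘ g = g ∘ ∂^M in every homological degree. -/

import Mathlib

/-!
Algebraic Discrete Morse theory (Jöllenbeck–Welker).

Setup: `R` is a (possibly noncommutative) ring and `C` is a chain complex of free
left `R`-modules `C i = X i → R` with fixed finite basis `X i` in homological
degree `i`; the differential is `∂ i (c) = ∑ c', d i c c' • c'` (we record only the
matrix of coefficients `d`).  `M` is a matching on the associated weighted directed
graph, `MStep` describes the edges of the modified graph `G_M`, `MPath` the directed
paths, `Gamma v w` the sum of the weights of all paths from `v` to `w`, `Crit` the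
critical basis elements, `DMmap` the Morse differential, and `fmap`, `gmap`, `chimap`
the comparison maps and the homotopy.
-/

attribute [local instance] Classical.propDecidable

noncomputable section

section ADMT

variable {R : Type} [Ring R]
variable (X : ℕ → Type) [∀ i, Fintype (X i)]
variable (d : ∀ i, X (i + 1) → X i → R)
variable (M : ∀ i, Set (X (i + 1) × X i))

/-- The family of coefficients `d` of the differentials satisfies `∂ ∘ ∂ = 0`,
i.e. `C` is a chain complex. -/
def IsComplexAux : Prop :=
  ∀ (i : ℕ) (c : X (i + 2)) (c'' : X i),
    ∑ c' : X (i + 1), d (i + 1) c c' * d i c' c'' = 0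

/-- The edges of the modified graph `G_M`: downward steps along non-matched edges
of the graph `G(C)` (weight `d i c c'`), and upward reversed steps along matched
edges (weight `-(d i c c')⁻¹`). -/
inductive MStep : (Σ i, X i) → (Σ i, X i) → Prop
  | down (i : ℕ) (c : X (i + 1)) (c' : X i) (hne : d i c c' ≠ 0)
      (hnm : (c, c') ∉ M i) : MStep ⟨i + 1, c⟩ ⟨i, c'⟩
  | up (i : ℕ) (c : X (i + 1)) (c' : X i) (hmem : (c, c') ∈ M i) :
      MStep ⟨i, c'⟩ ⟨i + 1, c⟩

/-- `M` is an acyclic matching: all edges of `M` are edges of the graph `G(C)`,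
every vertex lies in at most one edge of `M`, the weights of matched edges are
central units of `R`, and the modified graph `G_M` has no directed cycle. -/
def IsAcyclicMatching : Prop :=
  (∀ (i : ℕ) (c : X (i + 1)) (c' : X i), (c, c') ∈ M i → d i c c' ≠ 0) ∧
  (∀ (i : ℕ) (c : X (i + 1)) (c₁ c₂ : X i), (c, c₁) ∈ M i → (c, c₂) ∈ M i → c₁ = c₂) ∧
  (∀ (i : ℕ) (c₁ c₂ : X (i + 1)) (c' : X i), (c₁, c') ∈ M i → (c₂, c') ∈ M i → c₁ = c₂) ∧
  (∀ (i : ℕ) (a : X (i + 2)) (b : X (i + 1)) (c : X i),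
      (a, b) ∈ M (i + 1) → (b, c) ∈ M i → False) ∧
  (∀ (i : ℕ) (c : X (i + 1)) (c' : X i), (c, c') ∈ M i →
      d i c c' ∈ Set.center R ∧ IsUnit (d i c c')) ∧
  (∀ v : Σ i, X i, ¬ Relation.TransGen (MStep X d M) v v)

/-- Directed paths in the modified graph `G_M`. -/
inductive MPath : (Σ i, X i) → (Σ i, X i) → Type
  | nil (v : Σ i, X i) : MPath v v
  | down (i : ℕ) (c : X (i + 1)) (c' : X i) (hne : d i c c' ≠ 0)
      (hnm : (c, c') ∉ M i) (w : Σ i, X i) (p : MPath ⟨i, c'⟩ w) :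
      MPath ⟨i + 1, c⟩ w
  | up (i : ℕ) (c : X (i + 1)) (c' : X i) (hmem : (c, c') ∈ M i)
      (w : Σ i, X i) (p : MPath ⟨i + 1, c⟩ w) : MPath ⟨i, c'⟩ w

/-- The weight of a path: the product of the weights of its edges.  A non-matched
edge `c → c'` has weight `d i c c'`; a reversed matched edge has weight
`-(d i c c')⁻¹`. -/
def MPath.weight : ∀ {v w : Σ i, X i}, MPath X d M v w → R
  | _, _, .nil _ => 1
  | _, _, .down i c c' _ _ _ p => d i c c' * MPath.weight p
  | _, _, .up i c c' _ _ p => -(Ring.inverse (d i c c')) * MPath.weight p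

/-- The first step of the path decreases the homological degree. -/
def MPath.firstDown : ∀ {v w : Σ i, X i}, MPath X d M v w → Prop
  | _, _, .nil _ => False
  | _, _, .down _ _ _ _ _ _ _ => True
  | _, _, .up _ _ _ _ _ _ => False

/-- The first step of the path increases the homological degree. -/
def MPath.firstUp : ∀ {v w : Σ i, X i}, MPath X d M v w → Prop
  | _, _, .nil _ => False
  | _, _, .down _ _ _ _ _ _ _ => False
  | _, _, .up _ _ _ _ _ _ => True

/-- `Γ(v,w)`: the sum of the weights of all directed paths from `v` to `w` in `G_M`
(under the acyclicity hypothesis there are only finitely many such paths). -/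
def Gamma (v w : Σ i, X i) : R := ∑ᶠ p : MPath X d M v w, MPath.weight X d M p

/-- `Γ↓(v,w)`: the sum of the weights of all paths from `v` to `w` whose first step
decreases the homological degree. -/
def GammaDown (v w : Σ i, X i) : R :=
  ∑ᶠ (p : MPath X d M v w) (_ : MPath.firstDown X d M p), MPath.weight X d M p

/-- `Γ↑(v,w)`: the sum of the weights of all paths from `v` to `w` whose first step
increases the homological degree. -/
def GammaUp (v w : Σ i, X i) : R :=
  ∑ᶠ (p : MPath X d M v w) (_ : MPath.firstUp X d M p), MPath.weight X d M p

/-- A basis element is critical if it lies in no edge of `M`. -/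
def CriticalV (v : Σ i, X i) : Prop :=
  ∀ (j : ℕ) (a : X (j + 1)) (b : X j), (a, b) ∈ M j →
    v ≠ ⟨j + 1, a⟩ ∧ v ≠ ⟨j, b⟩

/-- The critical basis elements of homological degree `i`. -/
abbrev Crit (i : ℕ) := {c : X i // CriticalV X M ⟨i, c⟩}

/-- The `R`-linear map between free left `R`-modules determined by a matrix of
coefficients. -/
def liftMap {α β : Type} [Fintype α] (w : α → β → R) :
    (α → R) →ₗ[R] (β → R) where
  toFun v b := ∑ a, v a * w a b
  map_add' u v := by
    funext b
    simp [add_mul, Finset.sum_add_distrib]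
  map_smul' r v := by
    funext b
    simp [Finset.mul_sum, mul_assoc]

/-- The differential `∂` of the original complex `C`. -/
def Dmap (i : ℕ) : (X (i + 1) → R) →ₗ[R] (X i → R) :=
  liftMap (fun c c' => d i c c')

/-- The Morse differential `∂^M (c) = ∑ Γ(c,c') • c'` on the critical cells. -/
def DMmap (i : ℕ) : (Crit X M (i + 1) → R) →ₗ[R] (Crit X M i → R) :=
  liftMap (fun c c' => Gamma X d M ⟨i + 1, c.1⟩ ⟨i, c'.1⟩)

/-- The comparison map `f : C → C^M`, `f(c) = ∑ Γ(c,c') • c'`. -/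
def fmap (i : ℕ) : (X i → R) →ₗ[R] (Crit X M i → R) :=
  liftMap (fun c c' => Gamma X d M ⟨i, c⟩ ⟨i, c'.1⟩)

/-- The comparison map `g : C^M → C`, `g(c) = ∑ Γ(c,c') • c'`. -/
def gmap (i : ℕ) : (Crit X M i → R) →ₗ[R] (X i → R) :=
  liftMap (fun c c' => Gamma X d M ⟨i, c.1⟩ ⟨i, c'⟩)

/-- The homotopy `χ : C_i → C_{i+1}`, `χ(c) = ∑ Γ(c,c') • c'`. -/
def chimap (i : ℕ) : (X i → R) →ₗ[R] (X (i + 1) → R) :=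
  liftMap (fun c c' => Gamma X d M ⟨i, c⟩ ⟨i + 1, c'⟩)

/-!
Let `V` run along the upward edges of `G_M`, let `Z` collect its two-step paths that go up and then
down, and let `π` be the projection onto the critical cells. Splitting off the first two steps of a
path gives `χ = V + χ Z` and `f = π + f Z`. At the lower end `v` of a matched edge
`Z v = v + ∂ V v`; any other basis element `v` is killed by `V` and by `Z` and satisfies
`g π v = v + χ ∂ v`. Hence `L = g f - 1 - ∂ χ - χ ∂` satisfies `L Z = L`, and `L = 0` because `Z` is
locally nilpotent by acyclicity. Splitting off the first step of a path from a critical cell `c`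
gives `g c = c + χ ∂ c` and `∂^M c = f ∂ c`, so that
`g ∂^M c = g f ∂ c = ∂ c + ∂ χ ∂ c = ∂ g c`.
-/

section UnitMatching

variable {X d M}

section Linear

variable {α β γ : Type} [Fintype α]

theorem liftMap_single [DecidableEq α] (w : α → β → R) (a : α) :
    liftMap w (Pi.single a 1) = w a := by
  funext b
  simp [liftMap, Pi.single_apply]

theorem liftMap_liftMap [Fintype β] (u : α → β → R) (w : β → γ → R) (z : α → R) :
    liftMap w (liftMap u z) = liftMap (fun a => liftMap w (u a)) z := by
  funext c
  simp only [liftMap, LinearMap.coe_mk, AddHom.coe_mk, Finset.sum_mul, Finset.mul_sum, mul_assoc]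
  exact Finset.sum_comm

theorem finsum_sigma_subtype_mul {p : α → Prop} [DecidablePred p] {B : α → Type}
    [∀ a, Finite (B a)] (k : α → R) (f : ∀ a, B a → R) :
    ∑ᶠ x : (Σ a : Subtype p, B a), k x.1 * f x.1 x.2 =
      ∑ a, (if p a then k a else 0) * ∑ᶠ b, f a b := by
  have (a : α) : Fintype (B a) := Fintype.ofFinite _
  simp only [finsum_eq_sum_of_fintype, Fintype.sum_sigma, ← Finset.mul_sum, ite_mul, zero_mul,
    ← Finset.sum_filter]
  exact (Finset.sum_subtype _ (by simp) fun a => k a * ∑ b, f a b).symm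

end Linear

/-- Acyclic matchings whose matched edges are weighted by arbitrary units of `R`, central or not. -/
structure IsAcyclicUnitMatching (X : ℕ → Type) (d : ∀ i, X (i + 1) → X i → R)
    (M : ∀ i, Set (X (i + 1) × X i)) : Prop where
  lower_unique : ∀ {i} {c : X (i + 1)} {c₁ c₂ : X i}, (c, c₁) ∈ M i → (c, c₂) ∈ M i → c₁ = c₂
  upper_unique : ∀ {i} {c₁ c₂ : X (i + 1)} {c' : X i}, (c₁, c') ∈ M i → (c₂, c') ∈ M i → c₁ = c₂
  not_both : ∀ {i} {a : X (i + 2)} {b : X (i + 1)} {c : X i}, (a, b) ∈ M (i + 1) → (b, c) ∉ M i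
  isUnit : ∀ {i} {c : X (i + 1)} {c' : X i}, (c, c') ∈ M i → IsUnit (d i c c')
  acyclic : ∀ v, ¬ Relation.TransGen (MStep X d M) v v

/-- `v` is the upper end of a matched edge. -/
inductive IsUpperEnd (M : ∀ i, Set (X (i + 1) × X i)) : (Σ i, X i) → Prop
  | of_mem {i : ℕ} {c : X (i + 1)} {c' : X i} (h : (c, c') ∈ M i) : IsUpperEnd M ⟨i + 1, c⟩

/-- `v` is the lower end of a matched edge. -/
inductive IsLowerEnd (M : ∀ i, Set (X (i + 1) × X i)) : (Σ i, X i) → Prop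
  | of_mem {i : ℕ} {c : X (i + 1)} {c' : X i} (h : (c, c') ∈ M i) : IsLowerEnd M ⟨i, c'⟩

section Paths

omit [∀ i, Fintype (X i)]

omit [Ring R] in
theorem criticalV_iff {v : Σ i, X i} : CriticalV X M v ↔ ¬ IsUpperEnd M v ∧ ¬ IsLowerEnd M v := by
  constructor
  · refine fun h => ⟨?_, ?_⟩
    · rintro ⟨hm⟩
      exact (h _ _ _ hm).1 rfl
    · rintro ⟨hm⟩
      exact (h _ _ _ hm).2 rfl
  · rintro ⟨hu, hl⟩ j a b hm
    refine ⟨?_, ?_⟩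
    · rintro rfl
      exact hu ⟨hm⟩
    · rintro rfl
      exact hl ⟨hm⟩

theorem IsAcyclicMatching.isAcyclicUnitMatching (hM : IsAcyclicMatching X d M) :
    IsAcyclicUnitMatching X d M := by
  obtain ⟨_, hlower, hupper, hboth, hunit, hacyclic⟩ := hM
  exact
    { lower_unique := hlower _ _ _ _
      upper_unique := hupper _ _ _ _
      not_both := hboth _ _ _ _
      isUnit := fun h => (hunit _ _ _ h).2
      acyclic := hacyclic }

theorem IsAcyclicUnitMatching.not_isLowerEnd (hM : IsAcyclicUnitMatching X d M) {i : ℕ}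
    {t : X (i + 1)} {v : X i} (h : (t, v) ∈ M i) : ¬ IsLowerEnd M ⟨i + 1, t⟩ :=
  fun ⟨hs⟩ => hM.not_both hs h

theorem IsAcyclicUnitMatching.not_isUpperEnd (hM : IsAcyclicUnitMatching X d M) {i : ℕ}
    {t : X (i + 1)} {v : X i} (h : (t, v) ∈ M i) : ¬ IsUpperEnd M ⟨i, v⟩ :=
  fun ⟨hb⟩ => hM.not_both h hb

-- The bound is attained only at upper ends: a lower end is never an upper end, so two upward
-- steps of a path are separated by a downward one.
theorem degree_le_of_reflTransGen (hM : IsAcyclicUnitMatching X d M) {v w : Σ i, X i}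
    (h : Relation.ReflTransGen (MStep X d M) v w) :
    w.1 ≤ v.1 + if IsUpperEnd M w then 1 else 0 := by
  induction h with
  | refl => exact Nat.le_add_right _ _
  | tail _ step ih =>
    cases step with
    | down i c c' =>
      have : i + 1 ≤ v.1 + 1 := ih.trans (by gcongr; split_ifs <;> simp)
      exact (Nat.le_of_succ_le_succ this).trans (Nat.le_add_right _ _)
    | up i c c' hmem =>
      rw [if_neg (hM.not_isUpperEnd hmem)] at ih
      rw [if_pos ⟨hmem⟩]
      exact Nat.succ_le_succ ih

namespace MPath

theorem reflTransGen {v w : Σ i, X i} (p : MPath X d M v w) :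
    Relation.ReflTransGen (MStep X d M) v w := by
  induction p with
  | nil => exact .refl
  | down i c c' hne hnm _ _ ih => exact .head (.down i c c' hne hnm) ih
  | up i c c' hmem _ _ ih => exact .head (.up i c c' hmem) ih

theorem degree_lt_of_firstDown (hM : IsAcyclicUnitMatching X d M) {v w : Σ i, X i}
    {p : MPath X d M v w} (hp : p.firstDown X d M) :
    w.1 < v.1 + if IsUpperEnd M w then 1 else 0 := by
  cases p with
  | nil => exact hp.elim
  | down _ _ _ _ _ _ q =>
    have := degree_le_of_reflTransGen hM q.reflTransGen
    dsimp only at this ⊢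
    omega
  | up => exact hp.elim

/-- Removing the first step of a path that starts downwards. -/
def firstDownEquiv (i : ℕ) (c : X (i + 1)) (w : Σ i, X i) :
    {p : MPath X d M ⟨i + 1, c⟩ w // p.firstDown X d M} ≃
      Σ y : {y : X i // d i c y ≠ 0 ∧ (c, y) ∉ M i}, MPath X d M ⟨i, y.1⟩ w where
  toFun
    | ⟨.down _ _ y hne hnm _ p, _⟩ => ⟨⟨y, hne, hnm⟩, p⟩
  invFun x := ⟨.down i c x.1.1 x.1.2.1 x.1.2.2 w x.2, trivial⟩
  left_inv
    | ⟨.down _ _ _ _ _ _ _, _⟩ => rfl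
  right_inv _ := rfl

/-- Removing the first step of a path that starts upwards. -/
def firstUpEquiv (i : ℕ) (v : X i) (w : Σ i, X i) :
    {p : MPath X d M ⟨i, v⟩ w // p.firstUp X d M} ≃
      Σ t : {t : X (i + 1) // (t, v) ∈ M i}, MPath X d M ⟨i + 1, t.1⟩ w where
  toFun
    | ⟨.up _ t _ hmem _ p, _⟩ => ⟨⟨t, hmem⟩, p⟩
  invFun x := ⟨.up i x.1.1 v x.1.2 w x.2, trivial⟩
  left_inv
    | ⟨.up _ _ _ _ _ _, _⟩ => rfl
  right_inv _ := rfl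

theorem subsingleton_not_firstDown_not_firstUp (v w : Σ i, X i) :
    {p : MPath X d M v w | ¬ p.firstDown X d M ∧ ¬ p.firstUp X d M}.Subsingleton := by
  rintro (_ | _ | _) ⟨hpd, hpu⟩ q ⟨hqd, hqu⟩
  · cases q with
    | nil => rfl
    | down => exact (hqd trivial).elim
    | up => exact (hqu trivial).elim
  · exact (hpd trivial).elim
  · exact (hpu trivial).elim

theorem finsum_weight_not_firstDown_not_firstUp (v w : Σ i, X i) :
    ∑ᶠ p ∈ {p : MPath X d M v w | ¬ p.firstDown X d M ∧ ¬ p.firstUp X d M}, p.weight X d M =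
      if v = w then 1 else 0 := by
  split_ifs with h
  · subst h
    have hnil := (subsingleton_not_firstDown_not_firstUp (d := d) (M := M) v v).eq_singleton_of_mem
      (x := .nil v) ⟨id, id⟩
    rw [hnil, finsum_mem_singleton, weight]
  · refine finsum_mem_of_eqOn_zero fun p hp => ?_
    cases p with
    | nil => exact (h rfl).elim
    | down => exact (hp.1 trivial).elim
    | up => exact (hp.2 trivial).elim

end MPath

theorem GammaDown_zero (c : X 0) (w : Σ i, X i) : GammaDown X d M ⟨0, c⟩ w = 0 :=
  finsum_mem_of_eqOn_zero fun p hp => by cases p <;> exact hp.elim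

theorem GammaDown_eq_zero (hM : IsAcyclicUnitMatching X d M) {v w : Σ i, X i}
    (h : v.1 + (if IsUpperEnd M w then 1 else 0) ≤ w.1) : GammaDown X d M v w = 0 :=
  finsum_mem_of_eqOn_zero fun _ hp =>
    absurd (MPath.degree_lt_of_firstDown hM hp) (not_lt_of_ge h)

theorem GammaUp_eq_zero {v : Σ i, X i} (hv : ¬ IsLowerEnd M v) (w : Σ i, X i) :
    GammaUp X d M v w = 0 := by
  refine finsum_mem_of_eqOn_zero fun p hp => ?_
  cases p with
  | nil => exact hp.elim
  | down => exact hp.elim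
  | up _ _ _ hmem => exact (hv ⟨hmem⟩).elim

end Paths

section Finiteness

omit [∀ i, Fintype (X i)]

theorem wellFounded_swap_of_finite_reachable {α : Type*} {r : α → α → Prop}
    (hfin : ∀ a, {b | Relation.ReflTransGen r a b}.Finite)
    (hacyclic : ∀ a, ¬ Relation.TransGen r a a) : WellFounded (Function.swap r) := by
  refine Subrelation.wf (fun {b a} (hab : r a b) => ?_)
    (measure fun a => {c | Relation.ReflTransGen r a c}.ncard).wf
  refine Set.ncard_lt_ncard ⟨fun c hc => .head hab hc, fun hsub => ?_⟩ (hfin a)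
  exact hacyclic a (.head' hab (hsub .refl))

variable [∀ i, Finite (X i)]

theorem wellFounded_swap_mStep (hM : IsAcyclicUnitMatching X d M) :
    WellFounded (Function.swap (MStep X d M)) := by
  refine wellFounded_swap_of_finite_reachable (fun v => ?_) hM.acyclic
  have hfin : (Sigma.fst ⁻¹' Set.Iic (v.1 + 1) : Set (Σ i, X i)).Finite := by
    refine (Set.finite_Iic _).preimage' fun i _ => ?_
    rw [← Set.range_sigmaMk]
    exact Set.finite_range _
  refine hfin.subset fun w hw => (degree_le_of_reflTransGen hM hw).trans ?_
  gcongr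
  split_ifs <;> simp

theorem MPath.finite (hM : IsAcyclicUnitMatching X d M) (v w : Σ i, X i) :
    Finite (MPath X d M v w) := by
  induction v using (wellFounded_swap_mStep hM).induction with
  | _ v ih =>
    have hdown : {p : MPath X d M v w | p.firstDown X d M}.Finite := by
      obtain ⟨_ | i, c⟩ := v
      · exact Set.Finite.subset Set.finite_empty fun p hp => by cases p <;> exact hp
      · have (y : {y : X i // d i c y ≠ 0 ∧ (c, y) ∉ M i}) : Finite (MPath X d M ⟨i, y⟩ w) :=
          ih _ (.down i c y y.2.1 y.2.2)
        exact Finite.of_equiv _ (firstDownEquiv i c w).symm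
    have hup : {p : MPath X d M v w | p.firstUp X d M}.Finite := by
      have (t : {t : X (v.1 + 1) // (t, v.2) ∈ M v.1}) : Finite (MPath X d M ⟨v.1 + 1, t⟩ w) :=
        ih _ (.up v.1 t v.2 t.2)
      exact Finite.of_equiv _ (firstUpEquiv v.1 v.2 w).symm
    refine Set.finite_univ_iff.mp
      (((hdown.union hup).union (subsingleton_not_firstDown_not_firstUp v w).finite).subset ?_)
    intro p _
    by_cases hpd : p.firstDown X d M <;> by_cases hpu : p.firstUp X d M <;> simp [hpd, hpu]

theorem Gamma_eq_add_GammaDown_add_GammaUp (hM : IsAcyclicUnitMatching X d M) (v w : Σ i, X i) :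
    Gamma X d M v w = (if v = w then 1 else 0) + GammaDown X d M v w + GammaUp X d M v w := by
  have := MPath.finite hM v w
  let down : Set (MPath X d M v w) := {p | p.firstDown X d M}
  let up : Set (MPath X d M v w) := {p | p.firstUp X d M}
  let triv : Set (MPath X d M v w) := {p | ¬ p.firstDown X d M ∧ ¬ p.firstUp X d M}
  have hcover : triv ∪ down ∪ up = Set.univ := by
    ext p
    simp only [triv, down, up, Set.mem_union, Set.mem_ofPred_eq, Set.mem_univ, iff_true]
    tauto
  have hdown_up : Disjoint (triv ∪ down) up := Set.disjoint_left.mpr fun p hp hu => by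
    rcases hp with hp | hp
    · exact hp.2 hu
    · cases p
      · exact hp
      · exact hu
      · exact hp
  calc Gamma X d M v w = ∑ᶠ p ∈ triv ∪ down ∪ up, p.weight X d M := by
        rw [hcover, finsum_mem_univ, Gamma]
    _ = (∑ᶠ p ∈ triv, p.weight X d M) + (∑ᶠ p ∈ down, p.weight X d M) +
          ∑ᶠ p ∈ up, p.weight X d M := by
        rw [finsum_mem_union hdown_up (Set.toFinite _) (Set.toFinite _),
          finsum_mem_union (Set.disjoint_left.mpr fun p hp => hp.1) (Set.toFinite _)
            (Set.toFinite _)]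
    _ = _ := by rw [MPath.finsum_weight_not_firstDown_not_firstUp, GammaDown, GammaUp]; rfl

end Finiteness

section FirstStep

variable (d M) in
/-- The weight of `c → y` as a downward edge of `G_M`, with the value `0` if there is none. -/
def unmatchedCoeff (i : ℕ) (c : X (i + 1)) (y : X i) : R :=
  if (c, y) ∈ M i then 0 else d i c y

variable (d M) in
/-- The weight of `v → t` as an upward edge of `G_M`, with the value `0` if there is none. -/
def reversalCoeff (i : ℕ) (v : X i) (t : X (i + 1)) : R :=
  if (t, v) ∈ M i then -Ring.inverse (d i t v) else 0

theorem GammaDown_succ (hM : IsAcyclicUnitMatching X d M) (i : ℕ) (c : X (i + 1)) (w : Σ i, X i) :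
    GammaDown X d M ⟨i + 1, c⟩ w = ∑ y, unmatchedCoeff d M i c y * Gamma X d M ⟨i, y⟩ w := by
  have (y : X i) : Finite (MPath X d M ⟨i, y⟩ w) := MPath.finite hM _ _
  have hcoeff (y : X i) : unmatchedCoeff d M i c y =
      if d i c y ≠ 0 ∧ (c, y) ∉ M i then d i c y else 0 := by
    by_cases h : d i c y = 0 <;> simp [unmatchedCoeff, h, ite_not]
  rw [GammaDown, ← finsum_subtype_eq_finsum_cond,
    ← finsum_comp_equiv (MPath.firstDownEquiv i c w).symm]
  simp only [hcoeff]
  exact finsum_sigma_subtype_mul (B := fun y => MPath X d M ⟨i, y⟩ w) (d i c)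
    fun _ => MPath.weight X d M

theorem GammaUp_eq_sum (hM : IsAcyclicUnitMatching X d M) (i : ℕ) (v : X i) (w : Σ i, X i) :
    GammaUp X d M ⟨i, v⟩ w = ∑ t, reversalCoeff d M i v t * Gamma X d M ⟨i + 1, t⟩ w := by
  have (t : X (i + 1)) : Finite (MPath X d M ⟨i + 1, t⟩ w) := MPath.finite hM _ _
  rw [GammaUp, ← finsum_subtype_eq_finsum_cond,
    ← finsum_comp_equiv (MPath.firstUpEquiv i v w).symm]
  exact finsum_sigma_subtype_mul (B := fun t => MPath X d M ⟨i + 1, t⟩ w)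
    (fun t => -Ring.inverse (d i t v)) fun _ => MPath.weight X d M

theorem Gamma_succ_of_not_isLowerEnd (hM : IsAcyclicUnitMatching X d M) {i : ℕ} {c : X (i + 1)}
    (hc : ¬ IsLowerEnd M ⟨i + 1, c⟩) (w : Σ i, X i) :
    Gamma X d M ⟨i + 1, c⟩ w = (if (⟨i + 1, c⟩ : Σ i, X i) = w then 1 else 0) +
      ∑ y, unmatchedCoeff d M i c y * Gamma X d M ⟨i, y⟩ w := by
  rw [Gamma_eq_add_GammaDown_add_GammaUp hM, GammaUp_eq_zero hc, add_zero, GammaDown_succ hM]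

theorem Gamma_eq_sum_reversal (hM : IsAcyclicUnitMatching X d M) {i : ℕ} {v : X i}
    {w : Σ i, X i} (hw : i + (if IsUpperEnd M w then 1 else 0) ≤ w.1) :
    Gamma X d M ⟨i, v⟩ w = (if (⟨i, v⟩ : Σ i, X i) = w then 1 else 0) +
      ∑ t, reversalCoeff d M i v t * ((if (⟨i + 1, t⟩ : Σ i, X i) = w then 1 else 0) +
        ∑ y, unmatchedCoeff d M i t y * Gamma X d M ⟨i, y⟩ w) := by
  rw [Gamma_eq_add_GammaDown_add_GammaUp hM, GammaDown_eq_zero hM hw, add_zero,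
    GammaUp_eq_sum hM]
  congr! 2 with t
  by_cases ht : (t, v) ∈ M i
  · rw [Gamma_succ_of_not_isLowerEnd hM (hM.not_isLowerEnd ht)]
  · simp only [reversalCoeff, if_neg ht, zero_mul]

end FirstStep

section Operators

variable (d M) in
/-- The part of the differential that runs along the unmatched edges: the downward edges of
`G_M`. -/
def unmatchedBoundary (i : ℕ) : (X (i + 1) → R) →ₗ[R] (X i → R) :=
  liftMap (unmatchedCoeff d M i)

variable (d M) in
/-- The discrete gradient: the map running along the reversed matched edges, which are the upward
edges of `G_M`. -/
def reversal (i : ℕ) : (X i → R) →ₗ[R] (X (i + 1) → R) :=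
  liftMap (reversalCoeff d M i)

variable (d M) in
/-- The map collecting the two-step paths of `G_M` that go up and then down; `χ` and `f` are
geometric series in it. -/
def zigzag (i : ℕ) : (X i → R) →ₗ[R] (X i → R) :=
  unmatchedBoundary d M i ∘ₗ reversal d M i

variable (X M) in
/-- The projection onto the span of the critical basis elements. -/
def critProj (i : ℕ) : (X i → R) →ₗ[R] (Crit X M i → R) :=
  LinearMap.funLeft R R Subtype.val

theorem reversal_single_of_mem (hM : IsAcyclicUnitMatching X d M) {i : ℕ} {t : X (i + 1)} {v : X i}
    (h : (t, v) ∈ M i) :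
    reversal d M i (Pi.single v 1) = -Ring.inverse (d i t v) • Pi.single t 1 := by
  rw [reversal, liftMap_single]
  funext s
  have : (s, v) ∈ M i ↔ s = t := ⟨fun hs => hM.upper_unique hs h, fun hs => hs ▸ h⟩
  by_cases hs : s = t
  · subst hs; simp [reversalCoeff, h]
  · simp [reversalCoeff, this, hs]

theorem reversal_single_of_not_isLowerEnd {i : ℕ} {v : X i} (h : ¬ IsLowerEnd M ⟨i, v⟩) :
    reversal d M i (Pi.single v 1) = 0 := by
  rw [reversal, liftMap_single]
  exact funext fun t => if_neg fun ht => h ⟨ht⟩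

theorem Dmap_single_of_mem (hM : IsAcyclicUnitMatching X d M) {i : ℕ} {t : X (i + 1)} {v : X i}
    (h : (t, v) ∈ M i) :
    Dmap X d i (Pi.single t 1) =
      unmatchedBoundary d M i (Pi.single t 1) + d i t v • Pi.single v 1 := by
  rw [Dmap, unmatchedBoundary, liftMap_single, liftMap_single]
  funext y
  have : (t, y) ∈ M i ↔ y = v := ⟨fun hy => hM.lower_unique hy h, fun hy => hy ▸ h⟩
  by_cases hy : y = v
  · subst hy; simp [unmatchedCoeff, h]
  · simp [unmatchedCoeff, this, hy]

theorem Dmap_single_of_not_isUpperEnd {i : ℕ} {c : X (i + 1)} (h : ¬ IsUpperEnd M ⟨i + 1, c⟩) :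
    Dmap X d i (Pi.single c 1) = unmatchedCoeff d M i c := by
  rw [Dmap, liftMap_single]
  exact funext fun y => (if_neg fun hy => h ⟨hy⟩).symm

theorem zigzag_single_of_mem (hM : IsAcyclicUnitMatching X d M) {i : ℕ} {t : X (i + 1)} {v : X i}
    (h : (t, v) ∈ M i) :
    zigzag d M i (Pi.single v 1) =
      Pi.single v 1 + Dmap X d i (reversal d M i (Pi.single v 1)) := by
  rw [zigzag, LinearMap.comp_apply, reversal_single_of_mem hM h, map_smul, map_smul,
    Dmap_single_of_mem hM h, smul_add, smul_smul, neg_mul,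
    Ring.inverse_mul_cancel _ (hM.isUnit h), neg_one_smul]
  abel

theorem transGen_of_zigzag_apply_ne_zero {i : ℕ} {v y : X i}
    (h : zigzag d M i (Pi.single v 1) y ≠ 0) :
    Relation.TransGen (MStep X d M) ⟨i, v⟩ ⟨i, y⟩ := by
  rw [zigzag, LinearMap.comp_apply, reversal, liftMap_single] at h
  obtain ⟨t, -, ht⟩ := Finset.exists_ne_zero_of_sum_ne_zero h
  have hup : (t, v) ∈ M i := by
    by_contra hn
    exact ht (by rw [reversalCoeff, if_neg hn, zero_mul])
  have hunmatched : unmatchedCoeff d M i t y ≠ 0 := right_ne_zero_of_mul ht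
  have hdown : (t, y) ∉ M i := fun hm => hunmatched (if_pos hm)
  rw [unmatchedCoeff, if_neg hdown] at hunmatched
  exact .head (.up i t v hup) (.single (.down i t y hunmatched hdown))

/-- By acyclicity `zigzag` is locally nilpotent, so that `1 - zigzag` is invertible. -/
theorem eq_zero_of_comp_zigzag_eq_self (hM : IsAcyclicUnitMatching X d M) {i : ℕ} {N : Type*}
    [AddCommGroup N] [Module R N] {L : (X i → R) →ₗ[R] N} (hL : L ∘ₗ zigzag d M i = L) : L = 0 := by
  suffices h : ∀ v : X i, L (Pi.single v 1) = 0 from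
    LinearMap.pi_ext' fun v => LinearMap.ext_ring (h v)
  intro v
  induction v using (InvImage.wf (Sigma.mk i) (wellFounded_swap_mStep hM).transGen).induction with
  | _ v ih =>
    rw [← hL, LinearMap.comp_apply, pi_eq_sum_univ' (zigzag d M i _), map_sum]
    refine Finset.sum_eq_zero fun y _ => ?_
    rw [map_smul]
    by_cases hy : zigzag d M i (Pi.single v 1) y = 0
    · rw [hy, zero_smul]
    · rw [ih y (Relation.transGen_swap.mpr (transGen_of_zigzag_apply_ne_zero hy)), smul_zero]

theorem liftMap_zigzag_single {i : ℕ} {β : Type} (w : X i → β → R) (v : X i) :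
    liftMap w (zigzag d M i (Pi.single v 1)) =
      liftMap (fun t => liftMap w (unmatchedCoeff d M i t)) (reversalCoeff d M i v) := by
  rw [zigzag, LinearMap.comp_apply, reversal, liftMap_single, unmatchedBoundary, liftMap_liftMap]

theorem chimap_single (hM : IsAcyclicUnitMatching X d M) {i : ℕ} (v : X i) :
    chimap X d M i (Pi.single v 1) =
      reversal d M i (Pi.single v 1) + chimap X d M i (zigzag d M i (Pi.single v 1)) := by
  rw [chimap, reversal, liftMap_single, liftMap_single, liftMap_zigzag_single]
  funext w
  have hw : i + (if IsUpperEnd M ⟨i + 1, w⟩ then 1 else 0) ≤ i + 1 := by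
    gcongr
    split_ifs <;> simp
  rw [Gamma_eq_sum_reversal hM hw]
  simp [liftMap, mul_add, Finset.sum_add_distrib]

theorem fmap_single (hM : IsAcyclicUnitMatching X d M) {i : ℕ} (v : X i) :
    fmap X d M i (Pi.single v 1) =
      critProj X M i (Pi.single v 1) + fmap X d M i (zigzag d M i (Pi.single v 1)) := by
  rw [fmap, liftMap_single, liftMap_zigzag_single]
  funext w
  have hw : i + (if IsUpperEnd M ⟨i, w.1⟩ then 1 else 0) ≤ i := by
    rw [if_neg (criticalV_iff.mp w.2).1, add_zero]
  rw [Gamma_eq_sum_reversal hM hw]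
  simp [liftMap, critProj, Pi.single_apply, eq_comm]

theorem Gamma_succ_of_critical (hM : IsAcyclicUnitMatching X d M) {i : ℕ} (c : Crit X M (i + 1))
    (w : Σ i, X i) :
    Gamma X d M ⟨i + 1, c⟩ w = (if (⟨i + 1, c⟩ : Σ i, X i) = w then 1 else 0) +
      ∑ y, Dmap X d i (Pi.single c.1 1) y * Gamma X d M ⟨i, y⟩ w := by
  obtain ⟨hupper, hlower⟩ := criticalV_iff.mp c.2
  rw [Gamma_succ_of_not_isLowerEnd hM hlower, Dmap_single_of_not_isUpperEnd hupper]

theorem DMmap_single (hM : IsAcyclicUnitMatching X d M) {i : ℕ} (c : Crit X M (i + 1)) :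
    DMmap X d M i (Pi.single c 1) = fmap X d M i (Dmap X d i (Pi.single c.1 1)) := by
  rw [DMmap, liftMap_single]
  funext w
  rw [Gamma_succ_of_critical hM]
  simp [fmap, liftMap]

end Operators

section Homotopy

variable (X d M) in
/-- The composite `χ ∘ ∂`, which is zero in degree `0`. -/
def chimapDmap : ∀ i, (X i → R) →ₗ[R] (X i → R)
  | 0 => 0
  | i + 1 => chimap X d M i ∘ₗ Dmap X d i

theorem Dmap_Dmap (hC : IsComplexAux X d) (i : ℕ) (z : X (i + 2) → R) :
    Dmap X d i (Dmap X d (i + 1) z) = 0 := by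
  rw [Dmap, Dmap, liftMap_liftMap]
  funext c
  simpa [liftMap] using Finset.sum_eq_zero fun a _ => by rw [hC i a c, mul_zero]

theorem chimapDmap_Dmap (hC : IsComplexAux X d) (i : ℕ) (z : X (i + 1) → R) :
    chimapDmap X d M i (Dmap X d i z) = 0 := by
  cases i with
  | zero => rfl
  | succ i => rw [chimapDmap, LinearMap.comp_apply, Dmap_Dmap hC, map_zero]

theorem gmap_single (hM : IsAcyclicUnitMatching X d M) {i : ℕ} (c : Crit X M i) :
    gmap X d M i (Pi.single c 1) = Pi.single c.1 1 + chimapDmap X d M i (Pi.single c.1 1) := by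
  rw [gmap, liftMap_single]
  funext w
  cases i with
  | zero =>
    rw [Gamma_eq_add_GammaDown_add_GammaUp hM, GammaDown_zero,
      GammaUp_eq_zero (criticalV_iff.mp c.2).2]
    simp [chimapDmap, Pi.single_apply, eq_comm]
  | succ i =>
    rw [Gamma_succ_of_critical hM]
    simp [chimapDmap, chimap, liftMap, Pi.single_apply, eq_comm]

theorem chimap_Dmap_reversal_single (hM : IsAcyclicUnitMatching X d M) {i : ℕ}
    {t : X (i + 1)} {v : X i} (h : (t, v) ∈ M i) :
    chimap X d M i (Dmap X d i (reversal d M i (Pi.single v 1))) =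
      -reversal d M i (Pi.single v 1) := by
  have hchi := chimap_single hM v
  rw [zigzag_single_of_mem hM h, map_add, add_left_comm, left_eq_add] at hchi
  exact eq_neg_of_add_eq_zero_right hchi

theorem chimap_Dmap_single_of_mem (hM : IsAcyclicUnitMatching X d M) {i : ℕ}
    {t : X (i + 1)} {v : X i} (h : (t, v) ∈ M i) :
    chimap X d M i (Dmap X d i (Pi.single t 1)) = -Pi.single t 1 := by
  have ht : (Pi.single t 1 : X (i + 1) → R) = -d i t v • reversal d M i (Pi.single v 1) := by
    rw [reversal_single_of_mem hM h, smul_smul, neg_mul_neg,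
      Ring.mul_inverse_cancel _ (hM.isUnit h), one_smul]
  rw [ht, map_smul, map_smul, chimap_Dmap_reversal_single hM h, smul_neg]

omit [∀ i, Fintype (X i)] in
theorem critProj_single {i : ℕ} (c : Crit X M i) :
    critProj X M i (Pi.single c.1 1 : X i → R) = Pi.single c 1 := by
  funext w
  simp [critProj, Pi.single_apply, Subtype.ext_iff]

omit [∀ i, Fintype (X i)] in
theorem critProj_single_of_not_critical {i : ℕ} {v : X i} (hv : ¬ CriticalV X M ⟨i, v⟩) :
    critProj X M i (Pi.single v 1 : X i → R) = 0 := by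
  funext w
  have : w.1 ≠ v := fun h => hv (h ▸ w.2)
  simp [critProj, this]

theorem gmap_critProj_single_of_not_isLowerEnd (hM : IsAcyclicUnitMatching X d M) {i : ℕ}
    {v : X i} (hv : ¬ IsLowerEnd M ⟨i, v⟩) :
    gmap X d M i (critProj X M i (Pi.single v 1)) =
      Pi.single v 1 + chimapDmap X d M i (Pi.single v 1) := by
  by_cases hc : CriticalV X M ⟨i, v⟩
  · rw [critProj_single ⟨v, hc⟩, gmap_single hM]
  · have hupper : IsUpperEnd M ⟨i, v⟩ := by
      by_contra h
      exact hc (criticalV_iff.mpr ⟨h, hv⟩)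
    obtain ⟨hm⟩ := hupper
    rw [critProj_single_of_not_critical hc, map_zero, chimapDmap, LinearMap.comp_apply,
      chimap_Dmap_single_of_mem hM hm, add_neg_cancel]

theorem gmap_comp_fmap (hC : IsComplexAux X d) (hM : IsAcyclicUnitMatching X d M) (i : ℕ) :
    gmap X d M i ∘ₗ fmap X d M i =
      LinearMap.id + Dmap X d i ∘ₗ chimap X d M i + chimapDmap X d M i := by
  rw [← sub_eq_zero]
  refine eq_zero_of_comp_zigzag_eq_self hM (LinearMap.pi_ext' fun v => LinearMap.ext_ring ?_)
  simp only [LinearMap.comp_apply, LinearMap.sub_apply, LinearMap.add_apply, LinearMap.id_apply,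
    LinearMap.single_apply]
  have hf := fmap_single hM v
  have hchi := chimap_single hM v
  by_cases hv : IsLowerEnd M ⟨i, v⟩
  · obtain ⟨hm⟩ := hv
    have hz := zigzag_single_of_mem hM hm
    rw [critProj_single_of_not_critical fun hc => (criticalV_iff.mp hc).2 ⟨hm⟩, zero_add] at hf
    have hchiD : chimapDmap X d M i (zigzag d M i (Pi.single v 1)) =
        chimapDmap X d M i (Pi.single v 1) := by
      rw [hz, map_add, chimapDmap_Dmap hC, add_zero]
    rw [← hf, hchiD, hchi, map_add, hz]
    abel
  · have hrev := reversal_single_of_not_isLowerEnd (d := d) hv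
    have hz : zigzag d M i (Pi.single v 1) = 0 := by
      rw [zigzag, LinearMap.comp_apply, hrev, map_zero]
    rw [hz, map_zero, add_zero] at hf hchi
    rw [hz, hf, hchi, hrev, gmap_critProj_single_of_not_isLowerEnd hM hv]
    simp

end Homotopy

theorem gmap_chain_map_general (hC : IsComplexAux X d) (hM : IsAcyclicUnitMatching X d M) (i : ℕ) :
    Dmap X d i ∘ₗ gmap X d M (i + 1) = gmap X d M i ∘ₗ DMmap X d M i := by
  refine LinearMap.pi_ext' fun c => LinearMap.ext_ring ?_
  let e : X (i + 1) → R := Pi.single c.1 1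
  have hhomotopy := LinearMap.congr_fun (gmap_comp_fmap hC hM i) (Dmap X d i e)
  calc Dmap X d i (gmap X d M (i + 1) (Pi.single c 1))
      = Dmap X d i e + Dmap X d i (chimap X d M i (Dmap X d i e)) := by
        rw [gmap_single hM, map_add]; rfl
    _ = gmap X d M i (fmap X d M i (Dmap X d i e)) := by
        simpa [chimapDmap_Dmap hC] using hhomotopy.symm
    _ = gmap X d M i (DMmap X d M i (Pi.single c 1)) := by rw [DMmap_single hM]

end UnitMatching

/-- Lemma B.2 (C2).  If `M` is an acyclic matching on the graph
`G(C)` of the chain complex `C`, then `g` is a morphism of complexes: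
`∂ ∘ g = g ∘ ∂^M` in every homological degree. -/
theorem gmap_chain_map
    (hC : IsComplexAux X d) (hM : IsAcyclicMatching X d M) :
    ∀ i, Dmap X d i ∘ₗ gmap X d M (i + 1) = gmap X d M i ∘ₗ DMmap X d M i :=
  gmap_chain_map_general hC hM.isAcyclicUnitMatching

end ADMT

end
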